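/- arXiv:2501.10599 — 2 statements merged into one kernel-verified Lean document; each statement's English description precedes it below -/
import Mathlib

section
/- Let p > 1, a, b > 0 and λ > 0. Let φ ∈ C¹[0,1] satisfy φ(0) = φ(1) = 0, φ(t) = φ(1−t) for all t, φ'(t) ≥ 0 for t ∈ [0, 1/2], ∫₀¹ |φ(t)|^p dt = 1 and ∫₀¹ |φ'(t)|^p dt = λ. Set t₀ = a/(a+b) and define u : [0,1] → ℝ by u(t) = φ(t/(2t₀)) for t ∈ [0, t₀] and u(t) = φ((t + 1 − 2t₀)/(2(1 − t₀))) for t ∈ [t₀, 1]. Then ∫₀¹ |u(t)|^p dt = 1 and ∫₀¹ a^p [(u'(t))⁺]^p + b^p [(u'(t))⁻]^p dt = ((a+b)/2)^p λ; in particular λ^{a,b}_{1,p}(0,1) ≤ ((a+b)/2)^p λ_{1,p}(0,1). -/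
open Set

/-- `u` is C¹ on `[α, γ]` with derivative `u'` there. -/
def C1On (α γ : ℝ) (u u' : ℝ → ℝ) : Prop :=
  (∀ t ∈ Set.Icc α γ, HasDerivWithinAt u (u' t) (Set.Icc α γ) t) ∧
  ContinuousOn u' (Set.Icc α γ)

/-- Admissible functions on `[0, L]`: C¹ with zero boundary values. -/
def Adm (L : ℝ) (u u' : ℝ → ℝ) : Prop :=
  C1On 0 L u u' ∧ u 0 = 0 ∧ u L = 0

/-- The asymmetric energy integrand `a^p (s⁺)^p + b^p (s⁻)^p`. -/
noncomputable def asymE (p a b s : ℝ) : ℝ :=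
  a ^ p * (max s 0) ^ p + b ^ p * (max (-s) 0) ^ p

/-- The asymmetric flux `a^p (s⁺)^(p-1) - b^p (s⁻)^(p-1)`. -/
noncomputable def asymFlux (p a b s : ℝ) : ℝ :=
  a ^ p * (max s 0) ^ (p - 1) - b ^ p * (max (-s) 0) ^ (p - 1)

/-- The first Dirichlet eigenvalue `λ^{a,b}_{1,p}(0,L)`, as the infimum of the
asymmetric energy over normalized admissible functions. -/
noncomputable def lam1 (p a b L : ℝ) : ℝ :=
  sInf { E : ℝ | ∃ u u' : ℝ → ℝ, Adm L u u' ∧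
    (∫ t in (0:ℝ)..L, |u t| ^ p) = 1 ∧
    E = ∫ t in (0:ℝ)..L, asymE p a b (u' t) }

/-- `u` (a C¹ function on `[0,L]` with derivative `u'` and zero boundary values)
is a weak solution of `-Δ^{a,b}_p u = g` on `(0,L)`. -/
def IsWeakSol (p a b L : ℝ) (u u' g : ℝ → ℝ) : Prop :=
  Adm L u u' ∧
  ∀ φ φ' : ℝ → ℝ, Adm L φ φ' →
    (∫ t in (0:ℝ)..L, asymFlux p a b (u' t) * φ' t) =
      ∫ t in (0:ℝ)..L, g t * φ t

/-- The gluing of `φ : [0,1] → ℝ` at scale `t0`: the two monotone halves of `φ`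
are stretched to `[0,t0]` and `[t0,1]` respectively. -/
noncomputable def glue (φ : ℝ → ℝ) (t0 : ℝ) : ℝ → ℝ := fun t =>
  if t ≤ t0 then φ (t / (2 * t0)) else φ ((t + 1 - 2 * t0) / (2 * (1 - t0)))


open MeasureTheory intervalIntegral

lemma C1On.cont {α γ : ℝ} {u u' : ℝ → ℝ} (h : C1On α γ u u') : ContinuousOn u (Icc α γ) :=
  fun t ht => (h.1 t ht).continuousWithinAt

lemma asymE_nonneg (p a b s : ℝ) (ha : 0 < a) (hb : 0 < b) : 0 ≤ asymE p a b s := by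
  unfold asymE; positivity

lemma asymE_one (p s : ℝ) (hp : 1 < p) : asymE p 1 1 s = |s| ^ p := by
  have hp0 : p ≠ 0 := by linarith
  unfold asymE
  rcases le_total 0 s with h | h
  · rw [max_eq_left h, max_eq_right (by linarith : -s ≤ 0), abs_of_nonneg h,
      Real.zero_rpow hp0, Real.one_rpow]; ring
  · rw [max_eq_right h, max_eq_left (by linarith : 0 ≤ -s), abs_of_nonpos h,
      Real.zero_rpow hp0, Real.one_rpow]; ring

lemma asymE_pos (p a b s c K : ℝ) (hp : 1 < p) (ha : 0 < a) (hc : 0 < c) (hK : a / c = K)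
    (hs : 0 ≤ s) : asymE p a b (s / c) = K ^ p * |s| ^ p := by
  have hp0 : p ≠ 0 := by linarith
  have h : 0 ≤ s / c := by positivity
  have hK0 : 0 ≤ K := by rw [← hK]; positivity
  unfold asymE
  rw [max_eq_left h, max_eq_right (by linarith : -(s / c) ≤ 0), Real.zero_rpow hp0,
    abs_of_nonneg hs, ← Real.mul_rpow ha.le h, ← Real.mul_rpow hK0 hs, ← hK]
  rw [mul_zero, add_zero]
  congr 1
  ring

lemma asymE_neg (p a b s c K : ℝ) (hp : 1 < p) (hb : 0 < b) (hc : 0 < c) (hK : b / c = K)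
    (hs : s ≤ 0) : asymE p a b (s / c) = K ^ p * |s| ^ p := by
  have := asymE_pos p b a (-s) c K hp hb hc hK (by linarith)
  rw [abs_neg] at this
  rw [← this]
  unfold asymE
  rw [neg_div, neg_neg]; ring

lemma C1On.comp_affine {u u' : ℝ → ℝ} (h : C1On 0 1 u u') {α γ m c : ℝ}
    (hm : ∀ t ∈ Icc α γ, (t + c) / m ∈ Icc (0:ℝ) 1) :
    C1On α γ (fun t => u ((t + c) / m)) (fun t => u' ((t + c) / m) / m) := by
  constructor
  · intro t ht
    have h1 := h.1 _ (hm t ht)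
    have h2 : HasDerivWithinAt (fun t => (t + c) / m) (1 / m) (Icc α γ) t :=
      (((hasDerivAt_id t).add_const c).div_const m).hasDerivWithinAt
    have := HasDerivWithinAt.comp t h1 h2 hm
    simpa [Function.comp_def, div_eq_mul_inv] using this
  · apply ContinuousOn.div_const
    exact h.2.comp (by fun_prop) hm

lemma C1On.glue {f f' g g' : ℝ → ℝ} {α c γ : ℝ} (h1 : α ≤ c) (h2 : c ≤ γ)
    (hf : C1On α c f f') (hg : C1On c γ g g') (e : f c = g c) (e' : f' c = g' c) :
    C1On α γ (fun t => if t ≤ c then f t else g t) (fun t => if t ≤ c then f' t else g' t) := by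
  have hR : ∀ t ∈ Icc c γ, (if t ≤ c then f t else g t) = g t := by
    intro t ht
    split_ifs with h
    · rw [le_antisymm h ht.1, e]
    · rfl
  have hR' : ∀ t ∈ Icc c γ, (if t ≤ c then f' t else g' t) = g' t := by
    intro t ht
    split_ifs with h
    · rw [le_antisymm h ht.1, e']
    · rfl
  have hL : ∀ t ∈ Icc α c, (if t ≤ c then f t else g t) = f t := fun t ht => if_pos ht.2
  have hL' : ∀ t ∈ Icc α c, (if t ≤ c then f' t else g' t) = f' t := fun t ht => if_pos ht.2
  constructor
  · intro t ht
    rw [← Icc_union_Icc_eq_Icc h1 h2]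
    apply HasDerivWithinAt.union
    · by_cases h : t ∈ Icc α c
      · beta_reduce
        rw [hL' t h]
        exact (hf.1 t h).congr hL (hL t h)
      · apply HasFDerivWithinAt.of_notMem_closure
        rwa [isClosed_Icc.closure_eq]
    · by_cases h : t ∈ Icc c γ
      · beta_reduce
        rw [hR' t h]
        exact (hg.1 t h).congr hR (hR t h)
      · apply HasFDerivWithinAt.of_notMem_closure
        rwa [isClosed_Icc.closure_eq]
  · rw [← Icc_union_Icc_eq_Icc h1 h2]
    exact (hf.2.congr hL').union_of_isClosed (hg.2.congr hR') isClosed_Icc isClosed_Icc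

lemma cont_rpow {p : ℝ} (hp : 1 < p) {f : ℝ → ℝ} {s : Set ℝ} (hf : ContinuousOn f s) :
    ContinuousOn (fun t => |f t| ^ p) s :=
  hf.abs.rpow_const (fun _ _ => Or.inr (by linarith))

lemma ii {f : ℝ → ℝ} (hf : ContinuousOn f (Icc 0 1)) {x y : ℝ} (hx : x ∈ Icc (0:ℝ) 1)
    (hy : y ∈ Icc (0:ℝ) 1) : IntervalIntegrable f volume x y :=
  (hf.mono (uIcc_subset_Icc hx hy)).intervalIntegrable

lemma half_int {f : ℝ → ℝ} (hf : ContinuousOn f (Icc 0 1))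
    (hs : ∀ t ∈ Icc (0:ℝ) 1, f (1 - t) = f t) :
    (∫ t in (0:ℝ)..(1/2), f t) = (∫ t in (0:ℝ)..1, f t) / 2 ∧
    (∫ t in (1/2:ℝ)..1, f t) = (∫ t in (0:ℝ)..1, f t) / 2 := by
  have h1 : (∫ t in (0:ℝ)..(1/2), f t) = ∫ t in (1/2:ℝ)..1, f t := by
    have : (∫ t in (0:ℝ)..(1/2), f (1 - t)) = ∫ t in (0:ℝ)..(1/2), f t := by
      apply integral_congr
      intro t ht
      rw [uIcc_of_le (by norm_num)] at ht
      exact hs t ⟨ht.1, by linarith [ht.2]⟩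
    rw [← this, integral_comp_sub_left]
    norm_num
  have h2 := integral_add_adjacent_intervals (ii hf (x := 0) (y := 1/2) (by simp) (by norm_num))
    (ii hf (x := 1/2) (y := 1) (by norm_num) (by simp))
  constructor <;> linarith

lemma deriv_symm {φ φ' : ℝ → ℝ} (hφ : C1On 0 1 φ φ') (hsym : ∀ t, φ t = φ (1 - t))
    (t : ℝ) (ht : t ∈ Icc (0:ℝ) 1) : φ' (1 - t) = - φ' t := by
  have ht' : 1 - t ∈ Icc (0:ℝ) 1 := ⟨by linarith [ht.2], by linarith [ht.1]⟩
  have h1 := hφ.1 (1 - t) ht'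
  have h2 : HasDerivWithinAt (fun t : ℝ => 1 - t) (-1) (Icc 0 1) t :=
    ((hasDerivAt_id t).const_sub 1).hasDerivWithinAt
  have h3 := HasDerivWithinAt.comp t h1 h2
    (fun s hs => ⟨by linarith [hs.2], by linarith [hs.1]⟩)
  have h4 : φ ∘ (fun t : ℝ => 1 - t) = φ := by
    funext s; exact (hsym s).symm
  rw [h4] at h3
  have := UniqueDiffWithinAt.eq_deriv _ (uniqueDiffOn_Icc (zero_lt_one' ℝ) t ht) h3 (hφ.1 t ht)
  linarith

lemma key (p a b : ℝ) (hp : 1 < p) (ha : 0 < a) (hb : 0 < b)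
    (φ φ' : ℝ → ℝ) (hφ : C1On 0 1 φ φ') (hsym : ∀ t, φ t = φ (1 - t))
    (hmono : ∀ t ∈ Icc (0:ℝ) (1/2 : ℝ), 0 ≤ φ' t) :
    ∃ u' : ℝ → ℝ, C1On 0 1 (glue φ (a / (a + b))) u' ∧
      (∫ t in (0:ℝ)..1, |glue φ (a / (a + b)) t| ^ p) = (∫ t in (0:ℝ)..1, |φ t| ^ p) ∧
      (∫ t in (0:ℝ)..1, asymE p a b (u' t)) =
        ((a + b) / 2) ^ p * (∫ t in (0:ℝ)..1, |φ' t| ^ p) := by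
  obtain ⟨t0, ht0⟩ : ∃ t0, t0 = a / (a + b) := ⟨_, rfl⟩
  rw [← ht0]
  have hab : 0 < a + b := by linarith
  have h0 : 0 < t0 := by rw [ht0]; positivity
  have h1' : 1 - t0 = b / (a + b) := by rw [ht0]; field_simp; ring
  have h1 : 0 < 1 - t0 := by rw [h1']; positivity
  have hK1 : a / (2 * t0) = (a + b) / 2 := by rw [ht0]; field_simp
  have hK2 : b / (2 * (1 - t0)) = (a + b) / 2 := by rw [h1']; field_simp
  have hd := deriv_symm hφ hsym
  have hhalf : φ' (1/2) = 0 := by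
    have := hd (1/2) (by norm_num)
    norm_num at this ⊢
    linarith
  have mL : ∀ t ∈ Icc 0 t0, (t + 0) / (2 * t0) ∈ Icc (0:ℝ) (1/2) := by
    intro t ht
    constructor
    · have := ht.1; positivity
    · rw [div_le_iff₀ (by positivity)]; linarith [ht.2]
  have mR : ∀ t ∈ Icc t0 1, (t + (1 - 2 * t0)) / (2 * (1 - t0)) ∈ Icc (1/2:ℝ) 1 := by
    intro t ht
    constructor
    · rw [le_div_iff₀ (by positivity)]; linarith [ht.1]
    · rw [div_le_iff₀ (by positivity)]; linarith [ht.2]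
  have eL : (t0 + 0) / (2 * t0) = 1/2 := by field_simp; ring
  have eR : (t0 + (1 - 2 * t0)) / (2 * (1 - t0)) = 1/2 := by field_simp; ring
  have cL := hφ.comp_affine (α := 0) (γ := t0) (m := 2 * t0) (c := 0)
    (fun t ht => ⟨(mL t ht).1, by linarith [(mL t ht).2]⟩)
  have cR := hφ.comp_affine (α := t0) (γ := 1) (m := 2 * (1 - t0)) (c := 1 - 2 * t0)
    (fun t ht => ⟨by linarith [(mR t ht).1], (mR t ht).2⟩)
  have hC := C1On.glue h0.le (by linarith) cL cR (by simp only [eL, eR])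
    (by simp only [eL, eR, hhalf, zero_div])
  have hgl : glue φ t0 = fun t => if t ≤ t0 then φ ((t + 0) / (2 * t0))
      else φ ((t + (1 - 2 * t0)) / (2 * (1 - t0))) := by
    funext t
    unfold glue
    rw [add_zero, add_sub_assoc]
  -- general splitting and substitution
  have sub : ∀ (H F : ℝ → ℝ) (k : ℝ), ContinuousOn F (Icc 0 1) →
      (∀ t ∈ Icc (0:ℝ) 1, F (1 - t) = F t) →
      (∀ t ∈ Icc 0 t0, H t = k * F ((t + 0) / (2 * t0))) →
      (∀ t ∈ Ioc t0 1, H t = k * F ((t + (1 - 2 * t0)) / (2 * (1 - t0)))) →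
      (∫ t in (0:ℝ)..1, H t) = k * ∫ t in (0:ℝ)..1, F t := by
    intro H F k hF hFs hl hr
    obtain ⟨s1, s2⟩ := half_int hF hFs
    have i1 : IntervalIntegrable H volume 0 t0 := by
      have : ContinuousOn H (Icc 0 t0) := by
        refine ContinuousOn.congr (f := fun t => k * F ((t + 0) / (2 * t0))) ?_ hl
        refine continuousOn_const.mul (hF.comp (by fun_prop) ?_)
        exact fun t ht => ⟨(mL t ht).1, by linarith [(mL t ht).2]⟩
      apply ContinuousOn.intervalIntegrable
      rwa [uIcc_of_le h0.le]
    have i2' : IntervalIntegrable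
        (fun t => k * F ((t + (1 - 2 * t0)) / (2 * (1 - t0)))) volume t0 1 := by
      apply ContinuousOn.intervalIntegrable
      rw [uIcc_of_le (by linarith)]
      refine continuousOn_const.mul (hF.comp (by fun_prop) ?_)
      exact fun t ht => ⟨by linarith [(mR t ht).1], (mR t ht).2⟩
    have i2 : IntervalIntegrable H volume t0 1 := by
      refine i2'.congr ?_
      intro t ht
      rw [uIoc_of_le (by linarith)] at ht
      exact (hr t ht).symm
    rw [← integral_add_adjacent_intervals i1 i2]
    have e1 : (∫ t in (0:ℝ)..t0, H t) = k * (2 * t0 * ∫ t in (0:ℝ)..(1/2), F t) := by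
      rw [integral_congr (g := fun t => k * F (t / (2 * t0)))]
      · rw [intervalIntegral.integral_const_mul, integral_comp_div _ (by positivity), zero_div]
        rw [add_zero] at eL
        rw [eL, smul_eq_mul]
      · intro t ht
        rw [uIcc_of_le h0.le] at ht
        simp only [hl t ht, add_zero]
    have e2 : (∫ t in t0..1, H t) = k * (2 * (1 - t0) * ∫ t in (1/2:ℝ)..1, F t) := by
      rw [integral_congr_Ioo_of_le (by linarith) (g := fun t => k * F ((t + (1 - 2 * t0)) / (2 * (1 - t0))))]
      · rw [intervalIntegral.integral_const_mul,
          integral_comp_add_right (fun t => F (t / (2 * (1 - t0)))),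
          integral_comp_div _ (by positivity), smul_eq_mul, eR]
        congr 4
        field_simp
        ring
      · intro t ht
        exact hr t ⟨ht.1, ht.2.le⟩
    rw [e1, e2, s1, s2]
    ring
  refine ⟨_, hgl ▸ hC, ?_, ?_⟩
  · rw [hgl]
    have := sub (fun t => |if t ≤ t0 then φ ((t + 0) / (2 * t0))
      else φ ((t + (1 - 2 * t0)) / (2 * (1 - t0)))| ^ p) (fun t => |φ t| ^ p) 1
      (cont_rpow hp hφ.cont) (fun t ht => by simp only [← hsym t])
      (fun t ht => by simp only [if_pos ht.2, one_mul])
      (fun t ht => by simp only [if_neg (not_le.2 ht.1), one_mul])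
    rw [one_mul] at this
    exact this
  · refine sub _ (fun t => |φ' t| ^ p) _ (cont_rpow hp hφ.2) ?_ ?_ ?_
    · intro t ht
      simp only [hd t ht, abs_neg]
    · intro t ht
      simp only [if_pos ht.2]
      exact asymE_pos _ _ _ _ _ _ hp ha (by positivity) hK1 (hmono _ (mL t ht))
    · intro t ht
      simp only [if_neg (not_le.2 ht.1)]
      have hm := mR t ⟨ht.1.le, ht.2⟩
      refine asymE_neg _ _ _ _ _ _ hp hb (by positivity) hK2 ?_
      have h3 := hd _ (⟨by linarith [hm.1], hm.2⟩ :
        (t + (1 - 2 * t0)) / (2 * (1 - t0)) ∈ Icc (0:ℝ) 1)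
      have h4 := hmono (1 - (t + (1 - 2 * t0)) / (2 * (1 - t0)))
        ⟨by linarith [hm.2], by linarith [hm.1]⟩
      linarith

lemma S_nonneg (p a b : ℝ) (ha : 0 < a) (hb : 0 < b) :
    ∀ E ∈ { E : ℝ | ∃ u u' : ℝ → ℝ, Adm 1 u u' ∧
      (∫ t in (0:ℝ)..1, |u t| ^ p) = 1 ∧
      E = ∫ t in (0:ℝ)..1, asymE p a b (u' t) }, 0 ≤ E := by
  rintro E ⟨u, u', -, -, rfl⟩
  exact integral_nonneg (by norm_num) (fun t _ => asymE_nonneg _ _ _ _ ha hb)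

lemma lam1_nonneg (p a b : ℝ) (ha : 0 < a) (hb : 0 < b) : 0 ≤ lam1 p a b 1 :=
  Real.sInf_nonneg (S_nonneg p a b ha hb)

lemma glue_bdry (φ : ℝ → ℝ) (t0 : ℝ) (h0 : 0 < t0) (h1 : t0 < 1) (e0 : φ 0 = 0) (e1 : φ 1 = 0) :
    glue φ t0 0 = 0 ∧ glue φ t0 1 = 0 := by
  unfold glue
  rw [if_pos h0.le, if_neg (not_le.2 h1), zero_div]
  have : (1 + 1 - 2 * t0) / (2 * (1 - t0)) = 1 := by
    rw [div_eq_one_iff_eq (by linarith)]; ring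
  rw [this]
  exact ⟨e0, e1⟩

lemma lemC (p a b : ℝ) (hp : 1 < p) (ha : 0 < a) (hb : 0 < b)
    (φ φ' : ℝ → ℝ) (hφ : Adm 1 φ φ') (hsym : ∀ t, φ t = φ (1 - t))
    (hmono : ∀ t ∈ Icc (0:ℝ) (1/2 : ℝ), 0 ≤ φ' t) :
    lam1 p a b 1 * (∫ t in (0:ℝ)..1, |φ t| ^ p) ≤
      ((a + b) / 2) ^ p * ∫ t in (0:ℝ)..1, |φ' t| ^ p := by
  obtain ⟨m, hm⟩ : ∃ m, m = ∫ t in (0:ℝ)..1, |φ t| ^ p := ⟨_, rfl⟩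
  have hp0 : p ≠ 0 := by linarith
  have m0 : 0 ≤ m := by
    rw [hm]; exact integral_nonneg (by norm_num) (fun t _ => by positivity)
  have e0 : 0 ≤ ∫ t in (0:ℝ)..1, |φ' t| ^ p :=
    integral_nonneg (by norm_num) (fun t _ => by positivity)
  rw [← hm]
  rcases m0.eq_or_lt with h | hpos
  · rw [← h, mul_zero]; positivity
  obtain ⟨c, hc⟩ : ∃ c, c = (m⁻¹) ^ (p⁻¹) := ⟨_, rfl⟩
  have hc0 : 0 < c := by rw [hc]; positivity
  have hcp : c ^ p = m⁻¹ := by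
    rw [hc, Real.rpow_inv_rpow (by positivity) hp0]
  have hpow : ∀ f : ℝ → ℝ, (∫ t in (0:ℝ)..1, |c * f t| ^ p) = m⁻¹ * ∫ t in (0:ℝ)..1, |f t| ^ p := by
    intro f
    rw [← intervalIntegral.integral_const_mul]
    congr 1
    funext t
    rw [abs_mul, abs_of_pos hc0, Real.mul_rpow hc0.le (abs_nonneg _), hcp]
  obtain ⟨u', hu, hu1, hu2⟩ := key p a b hp ha hb (fun t => c * φ t) (fun t => c * φ' t)
    ⟨fun t ht => (hφ.1.1 t ht).const_mul c, continuousOn_const.mul hφ.1.2⟩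
    (fun t => by simp only [← hsym t]) (fun t ht => mul_nonneg hc0.le (hmono t ht))
  rw [hpow, ← hm, inv_mul_cancel₀ hpos.ne'] at hu1
  rw [hpow] at hu2
  have hab : 0 < a + b := by linarith
  have hbd := glue_bdry (fun t => c * φ t) (a / (a + b)) (by positivity)
    (by rw [div_lt_one hab]; linarith) (by simp [hφ.2.1]) (by simp [hφ.2.2])
  have hle : lam1 p a b 1 ≤ ((a + b) / 2) ^ p * (m⁻¹ * ∫ t in (0:ℝ)..1, |φ' t| ^ p) :=
    csInf_le ⟨0, S_nonneg p a b ha hb⟩ ⟨_, u', ⟨hu, hbd⟩, hu1, hu2.symm⟩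
  calc lam1 p a b 1 * m ≤ (((a + b) / 2) ^ p * (m⁻¹ * ∫ t in (0:ℝ)..1, |φ' t| ^ p)) * m := by
        gcongr
    _ = _ := by field_simp

lemma lemB_aux (p a b : ℝ) (hp : 1 < p) (ha : 0 < a) (hb : 0 < b)
    (w w' : ℝ → ℝ) (hw : C1On 0 1 w w') (hw0 : w 0 = 0) (x : ℝ) (hx : x ∈ Ioo (0:ℝ) (1/2)) :
    lam1 p a b 1 * (∫ t in (0:ℝ)..x, |w t| ^ p) ≤
      ((a + b) / 2) ^ p * ∫ t in (0:ℝ)..(1/2), |w' t| ^ p := by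
  obtain ⟨hx0, hx1⟩ := hx
  have hd : 0 < 1/2 - x := by linarith
  obtain ⟨G, hG⟩ : ∃ G : ℝ → ℝ, G = fun s => |w' (max 0 (min s 1))| *
      min 1 (max 0 ((1/2 - s) / (1/2 - x))) := ⟨_, rfl⟩
  have hGc : Continuous G := by
    rw [hG]
    refine Continuous.mul (Continuous.abs (hw.2.comp_continuous (by fun_prop) ?_)) (by fun_prop)
    intro s
    exact ⟨le_max_left _ _, max_le (by norm_num) (min_le_right _ _)⟩
  have hcl : ∀ s ∈ Icc (0:ℝ) 1, max 0 (min s 1) = s := by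
    intro s hs
    rw [min_eq_left hs.2, max_eq_right hs.1]
  have hG0 : ∀ s, 0 ≤ G s := by intro s; rw [hG]; positivity
  have hGx : ∀ s ∈ Icc 0 x, G s = |w' s| := by
    intro s hs
    have : 1 ≤ (1/2 - s) / (1/2 - x) := by
      rw [le_div_iff₀ hd]; linarith [hs.2]
    simp only [hG]
    rw [hcl s ⟨hs.1, by linarith [hs.2]⟩, max_eq_right (by linarith), min_eq_left this, mul_one]
  have hGle : ∀ s ∈ Icc (0:ℝ) 1, G s ≤ |w' s| := by
    intro s hs
    simp only [hG]
    rw [hcl s hs]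
    exact mul_le_of_le_one_right (abs_nonneg _) (min_le_left _ _)
  have hGz : ∀ s, 1/2 ≤ s → G s = 0 := by
    intro s hs
    simp only [hG]
    rw [max_eq_left (div_nonpos_of_nonpos_of_nonneg (by linarith) hd.le)]
    simp
  obtain ⟨D, hD⟩ : ∃ D : ℝ → ℝ, D = fun s => G s - G (1 - s) := ⟨_, rfl⟩
  have hDc : Continuous D := by rw [hD]; fun_prop
  have hDD : ∀ s, D (1 - s) = - D s := by
    intro s; simp only [hD, sub_sub_cancel]; ring
  have hDG : ∀ s ∈ Icc (0:ℝ) (1/2), D s = G s := by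
    intro s hs; simp only [hD]; rw [hGz (1 - s) (by linarith [hs.2]), sub_zero]
  obtain ⟨φ, hφ⟩ : ∃ φ : ℝ → ℝ, φ = fun t => ∫ s in (0:ℝ)..t, D s := ⟨_, rfl⟩
  have hder : ∀ t, HasDerivAt φ (D t) t := by
    intro t; rw [hφ]
    exact hDc.integral_hasStrictDerivAt 0 t |>.hasDerivAt
  have hsym : ∀ t, φ t = φ (1 - t) := by
    intro t
    have e1 : (∫ s in t..(1 - t), D s) = 0 := by
      have : (∫ s in t..(1 - t), D (1 - s)) = ∫ s in t..(1 - t), D s := by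
        rw [integral_comp_sub_left]; simp
      simp only [hDD, intervalIntegral.integral_neg] at this
      linarith
    have e2 := integral_add_adjacent_intervals (hDc.intervalIntegrable (μ := volume) 0 t)
      (hDc.intervalIntegrable (μ := volume) t (1 - t))
    simp only [hφ]
    linarith
  have hφ0 : φ 0 = 0 := by simp [hφ]
  have hφ1 : φ 1 = 0 := by rw [hsym 1, sub_self, hφ0]
  have hC1 : C1On 0 1 φ D := ⟨fun t _ => (hder t).hasDerivWithinAt, hDc.continuousOn⟩
  have hC := lemC p a b hp ha hb φ D ⟨hC1, hφ0, hφ1⟩ hsym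
    (fun t ht => by rw [hDG t ht]; exact hG0 t)
  have m1 := (half_int (cont_rpow hp hC1.cont) (fun t _ => by simp only [← hsym t])).1
  have m2 := (half_int (cont_rpow hp hC1.2) (fun t _ => by simp only [hDD t, abs_neg])).1
  have hhalf : (1/2 : ℝ) ∈ Icc (0:ℝ) 1 := by norm_num
  have hxI : x ∈ Icc (0:ℝ) 1 := ⟨hx0.le, by linarith⟩
  have hzI : (0:ℝ) ∈ Icc (0:ℝ) 1 := by norm_num
  -- energy bound
  have b1 : (∫ t in (0:ℝ)..(1/2), |D t| ^ p) ≤ ∫ t in (0:ℝ)..(1/2), |w' t| ^ p := by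
    apply integral_mono_on (by norm_num) (ii (cont_rpow hp hC1.2) hzI hhalf)
      (ii (cont_rpow hp hw.2) hzI hhalf)
    intro t ht
    rw [hDG t ht, abs_of_nonneg (hG0 t)]
    exact Real.rpow_le_rpow (hG0 t) (hGle t ⟨ht.1, by linarith [ht.2]⟩) (by linarith)
  -- pointwise bound
  have pw : ∀ t ∈ Icc 0 x, |w t| ≤ |φ t| := by
    intro t ht
    have htI : t ∈ Icc (0:ℝ) 1 := ⟨ht.1, by linarith [ht.2]⟩
    have sub : Icc 0 t ⊆ Icc (0:ℝ) 1 := Icc_subset_Icc le_rfl htI.2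
    have hi := ii hw.2 hzI htI
    have f1 : (∫ s in (0:ℝ)..t, w' s) = w t - w 0 := by
      apply integral_eq_sub_of_hasDerivAt_of_le ht.1 (hw.cont.mono sub) _ hi
      intro s hs
      exact (hw.1 s (sub (Ioo_subset_Icc_self hs))).hasDerivAt
        (Icc_mem_nhds hs.1 (by linarith [hs.2, htI.2]))
    have f2 : φ t = ∫ s in (0:ℝ)..t, |w' s| := by
      simp only [hφ]
      apply integral_congr
      intro s hs
      rw [uIcc_of_le ht.1] at hs
      simp only
      rw [hDG s ⟨hs.1, by linarith [hs.2, ht.2]⟩, hGx s ⟨hs.1, by linarith [hs.2, ht.2]⟩]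
    rw [hw0, sub_zero] at f1
    rw [← f1, f2]
    exact (abs_integral_le_integral_abs ht.1).trans (le_abs_self _)
  have b2 : (∫ t in (0:ℝ)..x, |w t| ^ p) ≤ ∫ t in (0:ℝ)..(1/2), |φ t| ^ p := by
    have c1 : (∫ t in (0:ℝ)..x, |w t| ^ p) ≤ ∫ t in (0:ℝ)..x, |φ t| ^ p := by
      apply integral_mono_on hx0.le (ii (cont_rpow hp hw.cont) hzI hxI)
        (ii (cont_rpow hp hC1.cont) hzI hxI)
      intro t ht
      exact Real.rpow_le_rpow (abs_nonneg _) (pw t ht) (by linarith)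
    have c2 := integral_add_adjacent_intervals (ii (cont_rpow hp hC1.cont) hzI hxI)
        (ii (cont_rpow hp hC1.cont) hxI hhalf)
    have c3 : 0 ≤ ∫ t in x..(1/2), |φ t| ^ p :=
      integral_nonneg hx1.le (fun t _ => by positivity)
    linarith
  have l0 := lam1_nonneg p a b ha hb
  have K0 : 0 ≤ ((a + b) / 2) ^ p := by positivity
  have := mul_le_mul_of_nonneg_left b1 K0
  have := mul_le_mul_of_nonneg_left b2 l0
  rw [m1] at this
  rw [m2] at *
  linarith

lemma lemB (p a b : ℝ) (hp : 1 < p) (ha : 0 < a) (hb : 0 < b)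
    (w w' : ℝ → ℝ) (hw : C1On 0 1 w w') (hw0 : w 0 = 0) :
    lam1 p a b 1 * (∫ t in (0:ℝ)..(1/2), |w t| ^ p) ≤
      ((a + b) / 2) ^ p * ∫ t in (0:ℝ)..(1/2), |w' t| ^ p := by
  have hi : IntegrableOn (fun t => |w t| ^ p) (Icc 0 (1/2)) volume :=
    ((cont_rpow hp hw.cont).mono (Icc_subset_Icc le_rfl (by norm_num))).integrableOn_Icc
  have hc := continuousOn_primitive_interval (μ := volume) (f := fun t => |w t| ^ p)
    (a := 0) (b := 1/2) (by rwa [uIcc_of_le (by norm_num)])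
  rw [uIcc_of_le (by norm_num)] at hc
  have h1 : ContinuousWithinAt (fun x => lam1 p a b 1 * ∫ t in (0:ℝ)..x, |w t| ^ p)
      (Ioo 0 (1/2)) (1/2) :=
    (continuousWithinAt_const.mul (hc (1/2) (by norm_num))).mono Ioo_subset_Icc_self
  have : (nhdsWithin (1/2:ℝ) (Ioo 0 (1/2))).NeBot := by
    rw [← mem_closure_iff_nhdsWithin_neBot, closure_Ioo (by norm_num)]
    norm_num
  refine le_of_tendsto h1 ?_
  filter_upwards [self_mem_nhdsWithin] with x hx
  exact lemB_aux p a b hp ha hb w w' hw hw0 x hx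

lemma lemD (p a b : ℝ) (hp : 1 < p) (ha : 0 < a) (hb : 0 < b)
    (w w' : ℝ → ℝ) (hw : Adm 1 w w') :
    lam1 p a b 1 * (∫ t in (0:ℝ)..1, |w t| ^ p) ≤
      ((a + b) / 2) ^ p * ∫ t in (0:ℝ)..1, |w' t| ^ p := by
  obtain ⟨hw, hw0, hw1⟩ := hw
  have hB1 := lemB p a b hp ha hb w w' hw hw0
  have hmap : ∀ t ∈ Icc (0:ℝ) 1, (t + (-1)) / (-1) ∈ Icc (0:ℝ) 1 := by
    intro t ht
    have : (t + (-1)) / (-1) = 1 - t := by ring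
    rw [this]
    exact ⟨by linarith [ht.2], by linarith [ht.1]⟩
  have hB2 := lemB p a b hp ha hb _ _ (hw.comp_affine hmap) (by norm_num [hw1])
  have r : ∀ t : ℝ, (t + (-1)) / (-1) = 1 - t := fun t => by ring
  simp only [r, div_neg, div_one, abs_neg] at hB2
  rw [integral_comp_sub_left (fun t => |w t| ^ p),
    integral_comp_sub_left (fun t => |w' t| ^ p)] at hB2
  have q : (1:ℝ) - 1/2 = 1/2 := by norm_num
  rw [q, sub_zero] at hB2
  have hhalf : (1/2 : ℝ) ∈ Icc (0:ℝ) 1 := by norm_num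
  have hzI : (0:ℝ) ∈ Icc (0:ℝ) 1 := by norm_num
  have hoI : (1:ℝ) ∈ Icc (0:ℝ) 1 := by norm_num
  rw [← integral_add_adjacent_intervals (ii (cont_rpow hp hw.cont) hzI hhalf)
    (ii (cont_rpow hp hw.cont) hhalf hoI),
    ← integral_add_adjacent_intervals (ii (cont_rpow hp hw.2) hzI hhalf)
    (ii (cont_rpow hp hw.2) hhalf hoI), mul_add, mul_add]
  exact add_le_add hB1 hB2

theorem stmt7 (p a b lam : ℝ) (hp : 1 < p) (ha : 0 < a) (hb : 0 < b) (hlam : 0 < lam)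
    (φ φ' : ℝ → ℝ) (hφ : Adm 1 φ φ')
    (hsym : ∀ t, φ t = φ (1 - t))
    (hmono : ∀ t ∈ Set.Icc (0:ℝ) (1/2 : ℝ), 0 ≤ φ' t)
    (hnorm : (∫ t in (0:ℝ)..1, |φ t| ^ p) = 1)
    (henergy : (∫ t in (0:ℝ)..1, |φ' t| ^ p) = lam) :
    (∃ u' : ℝ → ℝ, C1On 0 1 (glue φ (a / (a + b))) u' ∧
      (∫ t in (0:ℝ)..1, |glue φ (a / (a + b)) t| ^ p) = 1 ∧
      (∫ t in (0:ℝ)..1, asymE p a b (u' t)) = ((a + b) / 2) ^ p * lam) ∧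
    lam1 p a b 1 ≤ ((a + b) / 2) ^ p * lam1 p 1 1 1 := by
  constructor
  · have := key p a b hp ha hb φ φ' hφ.1 hsym hmono
    rwa [hnorm, henergy] at this
  · have K0 : 0 < ((a + b) / 2) ^ p := by positivity
    rw [← div_le_iff₀' K0]
    refine le_csInf ⟨_, φ, φ', hφ, hnorm, rfl⟩ ?_
    rintro E ⟨v, v', hv, hv1, rfl⟩
    rw [div_le_iff₀' K0]
    have := lemD p a b hp ha hb v v' hv
    simp only [asymE_one p _ hp]
    rwa [hv1, mul_one] at this
end

section
/- (Reflection lemma) Let p > 1, a, b, L > 0, let f : ℝ → ℝ be continuous, and let u ∈ C¹[0,L] with u(0) = u(L) = 0 be a weak solution of −Δ^{a,b}_p u = f(u) on (0,L). Suppose 0 ≤ α < β ≤ L satisfy u(α) = 0, u'(β) = 0 and u'(t) ≥ 0 for all t ∈ (α,β). Define w on [α, 2β−α] by w(t) = u(t) for t ∈ [α, β] and w(t) = u(2β − t) for t ∈ [β, 2β−α]. Then w ∈ C¹[α, 2β−α], w(α) = w(2β−α) = 0, and w is a weak solution of −a^p (|w'|^{p−2} w')' = f(w) on (α, 2β−α),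 i.e. ∫_α^{2β−α} a^p |w'(t)|^{p−2} w'(t) φ'(t) dt = ∫_α^{2β−α} f(w(t)) φ(t) dt for every φ ∈ C¹[α, 2β−α] with φ(α) = φ(2β−α) = 0. -/
open Set

lemma aux_ibp (α γ β C : ℝ) (h : α ≤ γ) (g : ℝ → ℝ) (hg : Continuous g) (φ φ' : ℝ → ℝ)
    (hφ : C1On α γ φ φ') (h0 : φ α = 0) (h1 : φ γ = 0) :
    (∫ t in α..γ, (C - ∫ s in β..t, g s) * φ' t) = ∫ t in α..γ, g t * φ t := by
  have hu : uIcc α γ = Icc α γ := uIcc_of_le h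
  have key := intervalIntegral.integral_mul_deriv_eq_deriv_mul_of_hasDerivWithinAt
    (a := α) (b := γ) (u := fun t => C - ∫ s in β..t, g s) (v := φ)
    (u' := fun t => - g t) (v' := φ')
    (fun t _ => (((hg.integral_hasStrictDerivAt β t).hasDerivAt).const_sub C).hasDerivWithinAt)
    (by rw [hu]; exact hφ.1)
    (hg.neg.intervalIntegrable _ _)
    (ContinuousOn.intervalIntegrable (by rw [hu]; exact hφ.2))
  rw [key, h0, h1]
  simp

lemma aux_dbr (L : ℝ) (hL : 0 < L) (F g : ℝ → ℝ) (hF : Continuous F) (hg : Continuous g)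
    (h : ∀ φ φ' : ℝ → ℝ, Adm L φ φ' →
      (∫ t in (0:ℝ)..L, F t * φ' t) = ∫ t in (0:ℝ)..L, g t * φ t) :
    ∃ c, ∀ t ∈ Icc 0 L, F t = c - ∫ s in (0:ℝ)..t, g s := by
  have hG : Continuous (fun t => ∫ s in (0:ℝ)..t, g s) :=
    intervalIntegral.continuous_primitive (fun a b => hg.intervalIntegrable a b) 0
  set G := (fun t => ∫ s in (0:ℝ)..t, g s) with hGdef
  let H := fun t => F t + G t
  have hH : Continuous H := hF.add hG
  let c := (∫ t in (0:ℝ)..L, H t) / L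
  let D := fun t => H t - c
  have hD : Continuous D := hH.sub continuous_const
  have hDint : ∫ t in (0:ℝ)..L, D t = 0 := by
    simp only [D]
    rw [intervalIntegral.integral_sub (hH.intervalIntegrable _ _) (by simp)]
    simp only [intervalIntegral.integral_const, c, smul_eq_mul]
    field_simp
    ring
  have hadm : Adm L (fun t => ∫ s in (0:ℝ)..t, D s) D :=
    ⟨⟨fun t _ => ((hD.integral_hasStrictDerivAt 0 t).hasDerivAt).hasDerivWithinAt,
      hD.continuousOn⟩, by simp, hDint⟩
  have e1 := h _ _ hadm
  rw [← aux_ibp 0 L 0 0 hL.le g hg _ _ hadm.1 hadm.2.1 hadm.2.2] at e1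
  have e2 : ∫ t in (0:ℝ)..L, D t * D t = 0 := by
    have : ∀ t, D t * D t = F t * D t - (0 - ∫ s in (0:ℝ)..t, g s) * D t - c * D t := by
      intro t; simp only [D, H, G]; ring
    simp only [this]
    rw [intervalIntegral.integral_sub, intervalIntegral.integral_sub, e1,
      intervalIntegral.integral_const_mul, hDint]
    · simp
    · exact (hF.mul hD).intervalIntegrable _ _
    · exact ((continuous_const.sub hG).mul hD).intervalIntegrable _ _
    · exact ((hF.mul hD).sub ((continuous_const.sub hG).mul hD)).intervalIntegrable _ _
    · exact (continuous_const.mul hD).intervalIntegrable _ _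
  refine ⟨c, fun t ht => ?_⟩
  have hz : D t = 0 := by
    by_contra hne
    have : 0 < ∫ t in (0:ℝ)..L, D t * D t :=
      intervalIntegral.integral_pos hL (hD.mul hD).continuousOn
        (fun x _ => mul_self_nonneg _) ⟨t, ht, mul_self_pos.2 hne⟩
    linarith
  simp only [D, H, G] at hz
  linarith

lemma aux_flux (p a b s : ℝ) (hp : 1 < p) (hs : 0 ≤ s) :
    a ^ p * |s| ^ (p - 2) * s = asymFlux p a b s := by
  have hp1 : p - 1 ≠ 0 := by linarith
  unfold asymFlux
  rcases hs.eq_or_lt with rfl | hs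
  · simp [Real.zero_rpow hp1]
  · rw [max_eq_left hs.le, max_eq_right (by linarith), Real.zero_rpow hp1, abs_of_pos hs,
      show p - 1 = (p - 2) + 1 by ring, Real.rpow_add_one hs.ne']
    ring

lemma aux_flux_cont (p a b : ℝ) (hp : 1 < p) : Continuous (asymFlux p a b) := by
  have : 0 ≤ p - 1 := by linarith
  unfold asymFlux
  refine (continuous_const.mul ((continuous_id.max continuous_const).rpow_const
    fun _ => Or.inr this)).sub (continuous_const.mul
      ((continuous_neg.max continuous_const).rpow_const fun _ => Or.inr this))

lemma aux_ext (L : ℝ) (hL : 0 < L) (v : ℝ → ℝ) (hv : ContinuousOn v (Icc 0 L)) :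
    ∃ V : ℝ → ℝ, Continuous V ∧ ∀ t ∈ Icc 0 L, V t = v t := by
  refine ⟨IccExtend hL.le ((Icc 0 L).domRestrict v), continuous_IccExtend_iff.2 hv.domRestrict, fun t ht => ?_⟩
  rw [IccExtend_of_mem _ _ ht]; rfl

theorem stmt8 (p a b L : ℝ) (hp : 1 < p) (ha : 0 < a) (hb : 0 < b) (hL : 0 < L)
    (f : ℝ → ℝ) (hf : Continuous f) (u u' : ℝ → ℝ)
    (hsol : IsWeakSol p a b L u u' (fun t => f (u t)))
    (α β : ℝ) (hα : 0 ≤ α) (hβ : β ≤ L) (hαβ : α < β)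
    (huα : u α = 0) (hu'β : u' β = 0)
    (hmono : ∀ t ∈ Set.Ioo α β, 0 ≤ u' t) :
    ∃ w w' : ℝ → ℝ,
      (∀ t ∈ Set.Icc α β, w t = u t) ∧
      (∀ t ∈ Set.Icc β (2 * β - α), w t = u (2 * β - t)) ∧
      C1On α (2 * β - α) w w' ∧ w α = 0 ∧ w (2 * β - α) = 0 ∧
      ∀ φ φ' : ℝ → ℝ, C1On α (2 * β - α) φ φ' → φ α = 0 → φ (2 * β - α) = 0 →
        (∫ t in α..(2 * β - α), a ^ p * |w' t| ^ (p - 2) * w' t * φ' t) =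
          ∫ t in α..(2 * β - α), f (w t) * φ t := by
  obtain ⟨⟨⟨hd, hc'⟩, -, -⟩, hweak⟩ := hsol
  obtain ⟨v, hv, hvu⟩ := aux_ext L hL u (fun t ht => (hd t ht).continuousWithinAt)
  obtain ⟨v', hv', hvu'⟩ := aux_ext L hL u' hc'
  have hsub : ∀ t ∈ Icc α β, t ∈ Icc 0 L := fun t ht => ⟨hα.trans ht.1, ht.2.trans hβ⟩
  have hrefl : ∀ t ∈ Icc β (2 * β - α), 2 * β - t ∈ Icc α β := fun t ht =>
    ⟨by linarith [ht.2], by linarith [ht.1]⟩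
  have hvβ : v' β = 0 := by rw [hvu' β (hsub β ⟨hαβ.le, le_rfl⟩), hu'β]
  have hnn : ∀ t ∈ Icc α β, 0 ≤ v' t := by
    intro t ht
    rw [← closure_Ioo hαβ.ne] at ht
    refine le_on_closure (f := fun _ => (0:ℝ)) (g := v') (fun x hx => ?_) continuousOn_const
      hv'.continuousOn ht
    rw [hvu' x (hsub x ⟨hx.1.le, hx.2.le⟩)]
    exact hmono x hx
  have hdv : ∀ t ∈ Icc α β, HasDerivWithinAt v (v' t) (Icc α β) t := by
    intro t ht
    rw [hvu' t (hsub t ht)]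
    exact ((hd t (hsub t ht)).mono hsub).congr (fun x hx => hvu x (hsub x hx)) (hvu t (hsub t ht))
  obtain ⟨c, hcF⟩ := aux_dbr L hL (fun t => asymFlux p a b (v' t)) (fun t => f (v t))
    ((aux_flux_cont p a b hp).comp hv') (hf.comp hv) (by
      intro φ φ' hφ
      have e := hweak φ φ' hφ
      have h1 : (∫ t in (0:ℝ)..L, asymFlux p a b (v' t) * φ' t)
          = ∫ t in (0:ℝ)..L, asymFlux p a b (u' t) * φ' t := by
        refine intervalIntegral.integral_congr fun t ht => ?_
        rw [uIcc_of_le hL.le] at ht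
        simp only [hvu' t ht]
      have h2 : (∫ t in (0:ℝ)..L, f (v t) * φ t) = ∫ t in (0:ℝ)..L, f (u t) * φ t := by
        refine intervalIntegral.integral_congr fun t ht => ?_
        rw [uIcc_of_le hL.le] at ht
        simp only [hvu t ht]
      rw [h1, h2]; exact e)
  have hgc : Continuous (fun t => f (v t)) := hf.comp hv
  have hgi : ∀ x y : ℝ, IntervalIntegrable (fun t => f (v t)) MeasureTheory.volume x y :=
    fun x y => hgc.intervalIntegrable x y
  have hcβ : c = ∫ s in (0:ℝ)..β, f (v s) := by
    have e := hcF β (hsub β ⟨hαβ.le, le_rfl⟩)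
    simp only [hvβ] at e
    rw [← aux_flux p a b 0 hp le_rfl] at e
    simp only [mul_zero] at e
    linarith
  have hK : ∀ t ∈ Icc α β, a ^ p * |v' t| ^ (p - 2) * v' t = ∫ s in t..β, f (v s) := by
    intro t ht
    rw [aux_flux p a b _ hp (hnn t ht)]
    have e := hcF t (hsub t ht)

    rw [e, hcβ, intervalIntegral.integral_interval_sub_left (hgi _ _) (hgi _ _)]
  let w : ℝ → ℝ := fun t => v (min t (2 * β - t))
  let w' : ℝ → ℝ := fun t => v' (min t β) - v' (2 * β - max t β)
  have hw : Continuous w := hv.comp (by fun_prop)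
  have hw' : Continuous w' := (hv'.comp (by fun_prop)).sub (hv'.comp (by fun_prop))
  have wl : ∀ t, t ≤ β → w t = v t := fun t ht => by
    simp only [w]; rw [min_eq_left (by linarith)]
  have wr : ∀ t, β ≤ t → w t = v (2 * β - t) := fun t ht => by
    simp only [w]; rw [min_eq_right (by linarith)]
  have wl' : ∀ t, t ≤ β → w' t = v' t := fun t ht => by
    simp only [w']; rw [min_eq_left ht, max_eq_right ht, show 2 * β - β = β by ring, hvβ, sub_zero]
  have wr' : ∀ t, β ≤ t → w' t = - v' (2 * β - t) := fun t ht => by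
    simp only [w']; rw [min_eq_right ht, max_eq_left ht, hvβ, zero_sub]
  have hle : α ≤ 2 * β - α := by linarith
  refine ⟨w, w', fun t ht => ?_, fun t ht => ?_, ⟨?_, hw'.continuousOn⟩, ?_, ?_, ?_⟩
  · rw [wl t ht.2, hvu t (hsub t ht)]
  · rw [wr t ht.1, hvu _ (hsub _ (hrefl t ht))]
  · intro t ht
    rw [← Icc_union_Icc_eq_Icc hαβ.le (by linarith : β ≤ 2 * β - α)]
    refine HasDerivWithinAt.union ?_ ?_
    · by_cases h : t ≤ β
      · rw [wl' t h]
        exact (hdv t ⟨ht.1, h⟩).congr (fun x hx => wl x hx.2) (wl t h)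
      · exact hasDerivWithinAt_iff_hasFDerivWithinAt.2 (HasFDerivWithinAt.of_notMem_closure (by
          rw [closure_Icc]; exact fun hh => h hh.2))
    · by_cases h : β ≤ t
      · rw [wr' t h]
        have e := (hdv (2 * β - t) (hrefl t ⟨h, ht.2⟩)).scomp t
          (((hasDerivAt_id t).const_sub (2 * β)).hasDerivWithinAt (s := Icc β (2 * β - α))) hrefl
        refine HasDerivWithinAt.congr (f := fun x => v (2 * β - x)) ?_
          (fun x hx => wr x hx.1) (wr t h)
        simpa [Function.comp_def] using e
      · exact hasDerivWithinAt_iff_hasFDerivWithinAt.2 (HasFDerivWithinAt.of_notMem_closure (by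
          rw [closure_Icc]; exact fun hh => h hh.1))
  · rw [wl α hαβ.le, hvu α (hsub α ⟨le_rfl, hαβ.le⟩), huα]
  · rw [wr _ (by linarith), show 2 * β - (2 * β - α) = α by ring,
      hvu α (hsub α ⟨le_rfl, hαβ.le⟩), huα]
  · intro φ φ' hφ h0 h1
    rw [← aux_ibp α (2 * β - α) β 0 hle (fun t => f (w t)) (hf.comp hw) φ φ' hφ h0 h1]
    refine intervalIntegral.integral_congr fun t ht => ?_
    rw [uIcc_of_le hle] at ht

    congr 1
    rcases le_total t β with h | h
    · rw [wl' t h, hK t ⟨ht.1, h⟩, zero_sub, ← intervalIntegral.integral_symm]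
      refine intervalIntegral.integral_congr fun s hs => ?_
      rw [uIcc_of_le h] at hs
      simp only [wl s hs.2]
    · rw [wr' t h, abs_neg, mul_neg, hK _ (hrefl t ⟨h, ht.2⟩), zero_sub, neg_inj]
      have e : ∫ s in β..t, f (w s) = ∫ s in β..t, f (v (2 * β - s)) := by
        refine intervalIntegral.integral_congr fun s hs => ?_
        rw [uIcc_of_le h] at hs
        simp only [wr s hs.1]
      rw [e, intervalIntegral.integral_comp_sub_left (fun s => f (v s)),
        show 2 * β - β = β by ring]
end
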